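/- For 0 ≤ k ≤ n−1, in the polynomial ring F_q[x_1,…,x_n] one has f_{k+1} = Σ_{i=0}^{k} (−1)^{k+i} c_{k,i} · x_{k+1}^{q^i}. -/

import Mathlib

open MvPolynomial

variable (F : Type) [Field F] [Fintype F] (n : ℕ)

/-- `fP F n k` is the orbit product `f_k` (1-indexed, meaningful for `1 ≤ k ≤ n`)
in `F_q[x_1,…,x_n]`. -/
noncomputable def fP (k : ℕ) : MvPolynomial (Fin n) F :=
  if h : 1 ≤ k ∧ k ≤ n then
    ∏ α : Fin (k - 1) → F,
      (X (⟨k - 1, by omega⟩ : Fin n) +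
        ∑ j : Fin (k - 1), C (α j) * X (⟨j.val, by omega⟩ : Fin n))
  else 0

/-- `cP F n s t` is the Dickson-type invariant `c_{s,t}`:
the sum over strictly increasing sequences `1 ≤ j_1 < ⋯ < j_{s-t} ≤ s` (encoded as
strictly monotone functions `Fin (s-t) → Fin s`) of `∏_l f_{j_l}^{(q-1)·q^{t+l-j_l}}`. -/
noncomputable def cP (s t : ℕ) : MvPolynomial (Fin n) F :=
  if s ≤ n then
    ∑ g ∈ Finset.univ.filter (fun g : Fin (s - t) → Fin s => ∀ a b : Fin (s - t), a < b → g a < g b),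
      ∏ l : Fin (s - t),
        fP F n ((g l).val + 1) ^ ((Fintype.card F - 1) * (Fintype.card F) ^ (t + l.val - (g l).val))
  else 0

/-!
Write `P_k(Y)` for the product of `Y + v` over the `F_q`-linear combinations `v` of `x_1, …, x_k`,
so that `f_{k+1} = P_k(x_{k+1})`. Since `∏_a (Y + a Z) = Y ^ q - Y Z ^ (q - 1)`, grouping the
factors of `P_{k+1}` by the coefficient of `x_{k+1}` and using that `P_k` is `F_q`-linear gives
`P_{k+1}(Y) = P_k(Y) ^ q - P_k(Y) f_{k+1} ^ (q - 1)`, from which `P_{k+1}` is linear in turn.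
On the coefficients of the `Y ^ (q ^ i)` this is, up to sign, the recurrence
`c_{k+1,i+1} = c_{k,i} ^ q + c_{k,i+1} f_{k+1} ^ (q - 1)`, which the sums defining the `c_{s,t}`
satisfy: separate the sequences `j_1 < ⋯ < j_{s-t}` according to whether the last term is `s`.
-/

section IncreasingSums

variable {m s : ℕ}

theorem strictMono_snoc_iff {α : Type*} [Preorder α] {g : Fin m → α} {a : α} :
    StrictMono (Fin.snoc g a : Fin (m + 1) → α) ↔ StrictMono g ∧ ∀ i, g i < a := by
  rw [← Fin.insertNth_last', Fin.strictMono_insertNth_iff]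
  simp [Fin.castSucc_lt_last]

theorem val_add_le_of_strictMono {g : Fin m → Fin s} (hg : StrictMono g) (l : Fin m) :
    (g l : ℕ) + m ≤ s + l := by
  have above : (Finset.Ioi l).card ≤ (Finset.Ioi (g l)).card :=
    Finset.card_le_card_of_injOn g (fun _ hi => by simpa using hg (by simpa using hi))
      hg.injective.injOn
  rw [Fin.card_Ioi, Fin.card_Ioi] at above
  omega

open scoped Classical in
/-- The values of an increasing sequence in `Fin (s + 1)` either all lie in `Fin s`, or all but the
last do and the last is `s`. -/
theorem sum_strictMono_fin_succ {M : Type*} [AddCommMonoid M]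
    (φ : (Fin (m + 1) → Fin (s + 1)) → M) :
    ∑ g with StrictMono g, φ g =
      ∑ g : Fin (m + 1) → Fin s with StrictMono g, φ (Fin.castSucc ∘ g) +
        ∑ g : Fin m → Fin s with StrictMono g,
          φ (Fin.snoc (α := fun _ => Fin (s + 1)) (Fin.castSucc ∘ g) (Fin.last s)) := by
  have castSucc_comp_injective (k : ℕ) :
      Function.Injective fun g : Fin k → Fin s => Fin.castSucc ∘ g :=
    (Fin.castSucc_injective s).comp_left
  rw [← Finset.sum_filter_not_add_sum_filter _ fun g => g (Fin.last m) = Fin.last s]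
  congr 1
  · refine (Finset.sum_nbij (Fin.castSucc ∘ ·) (fun g hg => ?_)
      (castSucc_comp_injective _).injOn (fun g hg => ?_) fun _ _ => rfl).symm
    · simp_all [Fin.strictMono_castSucc.comp, (Fin.castSucc_lt_last _).ne]
    · obtain ⟨hmono, hlast⟩ : StrictMono g ∧ g (Fin.last m) ≠ Fin.last s := by simpa using hg
      have lt_last (i) : g i ≠ Fin.last s :=
        ((hmono.monotone (Fin.le_last i)).trans_lt (Fin.lt_last_iff_ne_last.2 hlast)).ne
      exact ⟨fun i => (g i).castPred (lt_last i),
        by simpa using Fin.strictMono_castPred_comp lt_last hmono,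
        funext fun i => Fin.castSucc_castPred (g i) (lt_last i)⟩
  · refine (Finset.sum_nbij
      (fun g => Fin.snoc (α := fun _ => Fin (s + 1)) (Fin.castSucc ∘ g) (Fin.last s))
      (fun g hg => ?_) (fun g _ g' _ h => ?_) (fun g hg => ?_) fun _ _ => rfl).symm
    · simp_all [strictMono_snoc_iff, Fin.strictMono_castSucc.comp, Fin.castSucc_lt_last]
    · exact castSucc_comp_injective m (Fin.snoc_injective2 h).1
    · obtain ⟨hmono, hlast⟩ : StrictMono g ∧ g (Fin.last m) = Fin.last s := by simpa using hg
      have lt_last (i : Fin m) : g i.castSucc ≠ Fin.last s :=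
        ((hmono (Fin.castSucc_lt_last i)).trans_le (Fin.le_last _)).ne
      refine ⟨fun i => (g i.castSucc).castPred (lt_last i), ?_, ?_⟩
      · simpa using Fin.strictMono_castPred_comp lt_last (hmono.comp Fin.strictMono_castSucc)
      · refine funext <| Fin.lastCases ?_ fun i => ?_
        · simp [hlast]
        · simp

variable {R : Type*} [CommSemiring R]

open scoped Classical in
/-- The sum of `w 0 j₀ * ⋯ * w (m - 1) jₘ₋₁` over all increasing sequences
`0 ≤ j₀ < ⋯ < jₘ₋₁ < s`: an elementary symmetric sum whose weights also depend on the rank of each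
chosen index. -/
noncomputable def increasingSum (w : ℕ → ℕ → R) (m s : ℕ) : R :=
  ∑ g : Fin m → Fin s with StrictMono g, ∏ l : Fin m, w l (g l)

theorem increasingSum_zero (w : ℕ → ℕ → R) (s : ℕ) : increasingSum w 0 s = 1 := by
  simp [increasingSum, Subsingleton.strictMono]

theorem increasingSum_of_lt (w : ℕ → ℕ → R) (h : s < m) : increasingSum w m s = 0 := by
  refine Finset.sum_eq_zero fun g hg => ?_
  have := Fintype.card_le_of_injective g (Finset.mem_filter.1 hg).2.injective
  simp only [Fintype.card_fin] at this
  omega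

theorem increasingSum_succ (w : ℕ → ℕ → R) (m s : ℕ) :
    increasingSum w (m + 1) (s + 1) =
      increasingSum w (m + 1) s + increasingSum w m s * w m s := by
  simp [increasingSum, sum_strictMono_fin_succ, Fin.prod_univ_castSucc, Finset.sum_mul]

theorem increasingSum_congr {w w' : ℕ → ℕ → R} (h : ∀ l j, j + m ≤ s + l → w l j = w' l j) :
    increasingSum w m s = increasingSum w' m s :=
  Finset.sum_congr rfl fun g hg => Finset.prod_congr rfl fun l _ =>
    h l (g l) (val_add_le_of_strictMono (Finset.mem_filter.1 hg).2 l)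

theorem map_increasingSum {S : Type*} [CommSemiring S] (φ : R →+* S) (w : ℕ → ℕ → R) (m s : ℕ) :
    φ (increasingSum w m s) = increasingSum (fun l j => φ (w l j)) m s := by
  simp [increasingSum]

end IncreasingSums

section OrbitProducts

variable (K : Type*) [Field K] [Fintype K]

local notation "q" => Fintype.card K

theorem prod_X_sub_C_eq_X_pow_card_sub_X :
    ∏ a : K, (Polynomial.X - Polynomial.C a) =
      (Polynomial.X ^ q - Polynomial.X : Polynomial K) := by
  have hq : 1 < q := Fintype.one_lt_card
  have monic : (Polynomial.X ^ q - Polynomial.X : Polynomial K).Monic :=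
    Polynomial.monic_X_pow_sub (by simpa using hq)
  have h := Polynomial.prod_multiset_X_sub_C_of_monic_of_roots_card_eq monic (by
    rw [FiniteField.roots_X_pow_card_sub_X, FiniteField.X_pow_card_sub_X_natDegree_eq K hq,
      ← Finset.card_def, Finset.card_univ])
  rwa [FiniteField.roots_X_pow_card_sub_X] at h

variable {A : Type*} [CommRing A] [Algebra K A]

-- Homogenizing `X ^ q - X = ∏ (X - a)` avoids the substitution `X = y / z`, so that `A` need not be
-- a domain.
theorem prod_add_smul (y z : A) : ∏ a : K, (y + a • z) = y ^ q - y * z ^ (q - 1) := by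
  have hq : q ≠ 0 := Fintype.card_ne_zero
  have homogeneous : (∏ a : K, (X 0 - C a * X 1) : MvPolynomial (Fin 2) K) =
      X 0 ^ q - X 0 * X 1 ^ (q - 1) := by
    have h := Polynomial.homogenize_finsetProd (s := Finset.univ) (n := fun _ => 1)
      (p := fun a : K => Polynomial.X - Polynomial.C a) (by simp)
    rw [prod_X_sub_C_eq_X_pow_card_sub_X] at h
    simpa [hq] using h.symm
  calc ∏ a : K, (y + a • z) = ∏ a : K, (y - a • z) :=
        Fintype.prod_equiv (Equiv.neg K) _ _ (by simp)
    _ = y ^ q - y * z ^ (q - 1) := by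
        simpa [Algebra.smul_def] using congrArg (aeval ![y, z]) homogeneous

/-- The polynomial of the `K`-span of `x 0, …, x (k - 1)`, evaluated at `y`: the product of
`y + v` over all `K`-linear combinations `v` of these elements. The paper's `f_{k+1}` is
`orbitProd K x k (x k)`, the paper's variables being numbered from `1`. -/
def orbitProd (x : ℕ → A) (k : ℕ) (y : A) : A :=
  ∏ α : Fin k → K, (y + ∑ j, α j • x j)

variable (x : ℕ → A)

theorem orbitProd_zero (y : A) : orbitProd K x 0 y = y := by
  simp [orbitProd]

theorem orbitProd_succ_eq_prod (k : ℕ) (y : A) :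
    orbitProd K x (k + 1) y = ∏ a : K, orbitProd K x k (y + a • x k) := by
  simp only [orbitProd]
  rw [← Fintype.prod_prod_type']
  refine (Fintype.prod_equiv (Fin.snocEquiv fun _ => K) _ _ fun ⟨a, α⟩ => ?_).symm
  simp [Fin.snocEquiv_apply, Fin.sum_univ_castSucc, add_assoc, add_comm]

variable {K} in
theorem orbitProd_add_smul (k : ℕ) (a : K) (y z : A) :
    orbitProd K x k (y + a • z) = orbitProd K x k y + a • orbitProd K x k z := by
  induction k generalizing a y z with
  | zero => simp only [orbitProd_zero]
  | succ k ih =>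
    have frobenius_linear (u v : A) : (u + a • v) ^ q = u ^ q + a • v ^ q := by
      simpa using map_add (FiniteField.frobeniusAlgHom K A) u (a • v)
    simp only [orbitProd_succ_eq_prod, ih, prod_add_smul, frobenius_linear]
    simp only [Algebra.smul_def]
    ring

theorem orbitProd_succ (k : ℕ) (y : A) :
    orbitProd K x (k + 1) y =
      orbitProd K x k y ^ q - orbitProd K x k y * orbitProd K x k (x k) ^ (q - 1) := by
  simp only [orbitProd_succ_eq_prod, orbitProd_add_smul, prod_add_smul]

/-- The Dickson-type coefficient `c_{s,t}` of the elements `x 0, x 1, …`, for `t ≤ s`. Indices and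
ranks both start at `0` here, so the exponent `t + l - j` is that of the paper; it is never
truncated, since the `l`-th of `s - t` increasing indices below `s` is at most `t + l`. -/
noncomputable def dicksonCoeff (s t : ℕ) : A :=
  increasingSum (fun l j => orbitProd K x j (x j) ^ ((q - 1) * q ^ (t + l - j))) (s - t) s

theorem dicksonCoeff_self (s : ℕ) : dicksonCoeff K x s s = 1 := by
  rw [dicksonCoeff, Nat.sub_self, increasingSum_zero]

theorem dicksonCoeff_succ_zero (s : ℕ) :
    dicksonCoeff K x (s + 1) 0 = dicksonCoeff K x s 0 * orbitProd K x s (x s) ^ (q - 1) := by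
  simp [dicksonCoeff, increasingSum_succ, increasingSum_of_lt]

theorem dicksonCoeff_succ_succ {s t : ℕ} (h : t < s) :
    dicksonCoeff K x (s + 1) (t + 1) =
      dicksonCoeff K x s t ^ q +
        dicksonCoeff K x s (t + 1) * orbitProd K x s (x s) ^ (q - 1) := by
  obtain ⟨m, rfl⟩ := Nat.exists_eq_add_of_lt h
  have succ_sub_succ : t + m + 1 + 1 - (t + 1) = m + 1 := by omega
  have sub_eq : t + m + 1 - t = m + 1 := by omega
  have sub_succ_eq : t + m + 1 - (t + 1) = m := by omega
  simp only [dicksonCoeff, succ_sub_succ, sub_eq, sub_succ_eq, increasingSum_succ _ m (t + m + 1)]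
  congr 1
  · rw [← FiniteField.frobeniusAlgHom_apply K, ← AlgHom.coe_toRingHom, map_increasingSum]
    refine increasingSum_congr fun l j hj => ?_
    have exponent : t + 1 + l - j = t + l - j + 1 := by omega
    simp [exponent, ← pow_mul, pow_succ, mul_assoc]
  · have exponent : t + 1 + m - (t + m + 1) = 0 := by omega
    rw [exponent, pow_zero, mul_one]

theorem f_succ_eq_sum_general (k : ℕ) (y : A) :
    orbitProd K x k y =
      ∑ i ∈ Finset.range (k + 1), (-1) ^ (k + i) * dicksonCoeff K x k i * y ^ q ^ i := by
  induction k with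
  | zero => simp [orbitProd_zero, dicksonCoeff_self]
  | succ k ih =>
    have frobenius_ih : orbitProd K x k y ^ q =
        ∑ i ∈ Finset.range (k + 1),
          (-1) ^ (k + i) * dicksonCoeff K x k i ^ q * y ^ q ^ (i + 1) := by
      rw [ih, ← FiniteField.frobeniusAlgHom_apply K, map_sum]
      refine Finset.sum_congr rfl fun i _ => ?_
      rw [map_mul, map_mul, map_pow, map_neg, map_one]
      simp only [FiniteField.frobeniusAlgHom_apply, ← pow_mul, ← pow_succ]
    have middle : ∀ i ∈ Finset.range k,
        (-1) ^ (k + 1 + (i + 1)) * dicksonCoeff K x (k + 1) (i + 1) * y ^ q ^ (i + 1) =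
          (-1) ^ (k + i) * dicksonCoeff K x k i ^ q * y ^ q ^ (i + 1) -
            (-1) ^ (k + (i + 1)) * dicksonCoeff K x k (i + 1) * y ^ q ^ (i + 1) *
              orbitProd K x k (x k) ^ (q - 1) := by
      intro i hi
      rw [dicksonCoeff_succ_succ K x (Finset.mem_range.1 hi)]
      ring
    rw [orbitProd_succ, frobenius_ih, ih, Finset.sum_range_succ' _ (k + 1),
      Finset.sum_range_succ _ k, Finset.sum_range_succ' _ k, Finset.sum_range_succ _ k,
      Finset.sum_congr rfl middle, Finset.sum_sub_distrib, ← Finset.sum_mul,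
      dicksonCoeff_succ_zero, dicksonCoeff_self, dicksonCoeff_self]
    ring

end OrbitProducts

/-- The variables of `F_q[x_1,…,x_n]` as a sequence numbered from `0`, extended by `0`. -/
noncomputable def varSeq (i : ℕ) : MvPolynomial (Fin n) F :=
  if h : i < n then X ⟨i, h⟩ else 0

theorem fP_succ {k : ℕ} (hk : k < n) :
    fP F n (k + 1) = orbitProd F (varSeq F n) k (X ⟨k, hk⟩) := by
  have var_eq (j : Fin k) : varSeq F n j = X ⟨j, j.isLt.trans hk⟩ := dif_pos _
  simp [fP, orbitProd, hk, var_eq, smul_eq_C_mul]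

theorem cP_eq_dicksonCoeff {s : ℕ} (hs : s ≤ n) (t : ℕ) :
    cP F n s t = dicksonCoeff F (varSeq F n) s t := by
  rw [cP, if_pos hs, dicksonCoeff, increasingSum]
  refine Finset.sum_congr (by ext; simp only [Finset.mem_filter_univ]; rfl) fun g _ =>
    Finset.prod_congr rfl fun l _ => ?_
  have hg : g l < n := (g l).isLt.trans_le hs
  rw [fP_succ F n hg, varSeq, dif_pos hg]

/-- `f_{k+1} = ∑_{i=0}^{k} (-1)^{k+i} c_{k,i} x_{k+1}^{q^i}` for `0 ≤ k ≤ n-1`. -/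
theorem f_succ_eq_sum (k : ℕ) (hk : k < n) :
    fP F n (k + 1) =
      ∑ i ∈ Finset.range (k + 1),
        (-1 : MvPolynomial (Fin n) F) ^ (k + i) * cP F n k i *
          X (⟨k, hk⟩ : Fin n) ^ (Fintype.card F) ^ i := by
  simp only [fP_succ F n hk, cP_eq_dicksonCoeff F n hk.le, f_succ_eq_sum_general]
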